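/- Theorem 1 specialized with ξ_1 = ξ_2 = 1: for nonnegative integers k, ℓ and real parameters μ_1, μ_2, one has (ℓ+1)ζ(k+ℓ+4)∑_{a_1+a_2=k} μ_1^{a_1}μ_2^{a_2} + ∑_{a_1+a_2=k, b_1+b_2=ℓ} (μ_1^{a_1}μ_2^{a_2} + μ_2^{a_1}μ_1^{a_2}) ζ(a_2+b_2+2, a_1+b_1+2) = ∑_{a_1+a_2=k, b_1+b_2=ℓ} (μ_1^{a_1}μ_2^{a_2} + μ_2^{a_1}μ_1^{a_2}) ∑_{|α|=a_1+b_1+1, |β|=a_2+b_2+1} ζ(α_0,...,α_{a_1}+1, β_0,...,β_{a_2}+1) + ∑_{a_1+a_2+a_3=k, b_1+b_2+b_3=ℓ} (μ_1^{a_1}+μ_2^{a_1})(μ_1+μ_2)^{a_2} 2^{b_2} (μ_1^{a_3}+μ_2^{a_3}) ∑_{|α|=a_1+b_1+1, |β|=a_2+b_2+1, |γ|=a_3+b_3+1} ζ(α_0,...,α_{a_1}, β_0,...,β_{a_2}+γ_0, γ_1,...,γ_{a_3}+1). -/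

import Mathlib

open Finset

/-- Multiple zeta value `ζ(α₀,…,α_{n-1}) = ∑_{0<ℓ₀<⋯<ℓ_{n-1}} ∏ ℓᵢ^{-αᵢ}`. -/
noncomputable def mzv {n : ℕ} (α : Fin n → ℕ) : ℝ :=
  ∑' ℓ : {ℓ : Fin n → ℕ // StrictMono ℓ ∧ ∀ i, 0 < ℓ i},
    ∏ i, ((ℓ.1 i : ℝ) ^ (α i))⁻¹

/-- Compositions of `m` into `n` positive parts. -/
def Comp (n m : ℕ) : Type := {v : Fin n → ℕ // (∀ i, 0 < v i) ∧ ∑ i, v i = m}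

/-- Increase the last entry of a tuple by one. -/
def incLast {n : ℕ} (v : Fin n → ℕ) : Fin n → ℕ :=
  fun i => if (i : ℕ) = n - 1 then v i + 1 else v i

/-- `∑ ζ(α₀,…,α_{a₁}+1, β₀,…,β_{a₂}+1)` over compositions `|α| = a₁+b₁+1`,
`|β| = a₂+b₂+1`. -/
noncomputable def S2 (a₁ b₁ a₂ b₂ : ℕ) : ℝ :=
  ∑' (α : Comp (a₁ + 1) (a₁ + b₁ + 1)) (β : Comp (a₂ + 1) (a₂ + b₂ + 1)),
    mzv (Fin.append (incLast α.1) (incLast β.1))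

/-- `∑ ζ(α₀,…,α_{a₁}, β₀,…,β_{a₂}+γ₀, γ₁,…,γ_{a₃}+1)` over compositions
`|α| = a₁+b₁+1`, `|β| = a₂+b₂+1`, `|γ| = a₃+b₃+1`. -/
noncomputable def S3 (a₁ b₁ a₂ b₂ a₃ b₃ : ℕ) : ℝ :=
  ∑' (α : Comp (a₁ + 1) (a₁ + b₁ + 1)) (β : Comp (a₂ + 1) (a₂ + b₂ + 1))
     (γ : Comp (a₃ + 1) (a₃ + b₃ + 1)),
    mzv (incLast (Fin.append α.1 (Fin.append
      (Function.update β.1 (Fin.last a₂) (β.1 (Fin.last a₂) + γ.1 0))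
      (Fin.tail γ.1))))

/-!
Encode the nested sums of depth `a` with all index tuples as a generating function `φ_a(y; t)`,
where `t` is the polylogarithm variable and `y` marks the excess of the weight over the depth; let
`γ_a = ∫ φ_{a+1} dt/t`. With `θ_c = t d/dt - c y` one has `θ_1 φ_{a+1} = t/(1-t) φ_a` and
`θ_0 γ_a = φ_{a+1}`, while the Leibniz rule reads `θ_{c+d}(F G) = (θ_c F) G + F (θ_d G)`. Inverting
`θ_0`, `θ_1` and `θ_2` in turn expands `∑_{i+j=k} μ₁^i μ₂^j γ_i γ_j` into iterated integrals whose
values at `t = 1` are the sums `S2` and `S3`; the powers of `2` come from `θ_2`.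

The value of `γ_a` at `t = 1` is `∑_b ζ(a+b+2) y^b`, by Granville's sum formula, which turns the
left-hand side into products `ζ(i+p+2) ζ(j+q+2)`, evaluated by the harmonic product. The sum
formula follows by connected sums: weight the terms of `φ_a` by a kernel `K(m, n)` with
`∑_{n > k} K(m, n)/(n - y) = K(m, k)/m`, so that each summation is traded for a factor `1/m`.
-/

section AntidiagonalSums

variable {M : Type*} [AddCommMonoid M]

lemma sum_antidiagonal_assoc (f : ℕ → ℕ → ℕ → M) (n : ℕ) :
    ∑ p ∈ antidiagonal n, ∑ q ∈ antidiagonal p.1, f q.1 q.2 p.2 =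
      ∑ p ∈ antidiagonal n, ∑ q ∈ antidiagonal p.2, f p.1 q.1 q.2 := by
  rw [sum_sigma', sum_sigma']
  refine sum_nbij' (fun x => ⟨(x.2.1, x.2.2 + x.1.2), (x.2.2, x.1.2)⟩)
    (fun x => ⟨(x.1.1 + x.2.1, x.2.2), (x.1.1, x.2.1)⟩) ?_ ?_ ?_ ?_ ?_ <;>
  rintro ⟨⟨i, j⟩, ⟨k, l⟩⟩ h <;> grind [HasAntidiagonal.mem_antidiagonal]

lemma sum_antidiagonal_reverse (f : ℕ → ℕ → ℕ → M) (n : ℕ) :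
    ∑ p ∈ antidiagonal n, ∑ q ∈ antidiagonal p.2, f p.1 q.1 q.2 =
      ∑ p ∈ antidiagonal n, ∑ q ∈ antidiagonal p.2, f q.2 q.1 p.1 := by
  rw [← sum_antidiagonal_assoc, ← Nat.sum_antidiagonal_swap]
  exact sum_congr rfl fun p _ => (Nat.sum_antidiagonal_swap (f := fun q => f q.1 q.2 p.1)).symm

lemma sum_antidiagonal_eq_single {n : ℕ} (p : ℕ × ℕ) (hp : p.1 + p.2 = n) (f : ℕ × ℕ → M)
    (hf : ∀ q, q.1 ≠ p.1 → q.2 ≠ p.2 → f q = 0) : ∑ q ∈ antidiagonal n, f q = f p := by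
  refine sum_eq_single_of_mem p (mem_antidiagonal.2 hp) fun q hq hqp => ?_
  have hq := mem_antidiagonal.1 hq
  exact hf q (fun h => hqp (Prod.ext h (by omega))) (fun h => hqp (Prod.ext (by omega) h))

end AntidiagonalSums

section OperatorSeries

open PowerSeries

variable {R V : Type*} [CommSemiring R] [Semiring V] [Module R V]

/-- The action of power series of operators on `V` on power series over `V`, by the Cauchy
product. -/
noncomputable def seriesAct : (Module.End R V)⟦X⟧ →ₐ[R] Module.End R V⟦X⟧ :=
  AlgHom.ofLinearMap
    (LinearMap.mk₂ R (fun S F => mk fun n => ∑ p ∈ antidiagonal n, coeff p.1 S (coeff p.2 F))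
      (fun S T F => by ext n : 1; simp [sum_add_distrib])
      (fun c S F => by ext n : 1; simp [smul_sum])
      (fun S F G => by ext n : 1; simp [sum_add_distrib])
      (fun c S F => by ext n : 1; simp [smul_sum]))
    (by
      ext F n : 2
      rw [LinearMap.mk₂_apply, coeff_mk, sum_antidiagonal_eq_single (0, n)] <;>
        simp +contextual [coeff_one])
    (fun S T => by
      ext F n : 2
      simpa [coeff_mul] using
        sum_antidiagonal_assoc (fun i j l => coeff i S (coeff j T (coeff l F))) n)

lemma coeff_seriesAct (S : (Module.End R V)⟦X⟧) (F : V⟦X⟧) (n : ℕ) :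
    coeff n (seriesAct S F) = ∑ p ∈ antidiagonal n, coeff p.1 S (coeff p.2 F) := by
  simp [seriesAct]

lemma coeff_seriesAct_C (T : Module.End R V) (F : V⟦X⟧) (n : ℕ) :
    coeff n (seriesAct (C T) F) = T (coeff n F) := by
  rw [coeff_seriesAct, sum_antidiagonal_eq_single (0, n)] <;> simp +contextual [coeff_C]

lemma coeff_seriesAct_one (S : (Module.End R V)⟦X⟧) (n : ℕ) :
    coeff n (seriesAct S 1) = coeff n S 1 := by
  rw [coeff_seriesAct, sum_antidiagonal_eq_single (n, 0)] <;> simp +contextual [coeff_one]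

lemma seriesAct_X (F : V⟦X⟧) : seriesAct (R := R) X F = X * F := by
  ext n
  cases n with
  | zero => simp [coeff_seriesAct]
  | succ n =>
    rw [coeff_seriesAct, coeff_succ_X_mul, sum_antidiagonal_eq_single (1, n)] <;>
      simp +contextual [coeff_X, add_comm]

end OperatorSeries

section EulerOperators

open PowerSeries

/-- The Euler operator `t d/dt`, multiplying the coefficient of `t ^ n` by `n`. -/
noncomputable def euler : Module.End ℝ ℝ⟦X⟧ :=
  LinearMap.mulLeft ℝ X ∘ₗ (derivative ℝ).toLinearMap

/-- Integration against `dt / t`, dividing the coefficient of `t ^ n` by `n`. The constant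
coefficient is sent to `0`, by the convention `x / 0 = 0`. -/
noncomputable def eulerInt : Module.End ℝ ℝ⟦X⟧ where
  toFun f := mk fun n => coeff n f / n
  map_add' f g := by ext n; simp [add_div]
  map_smul' c f := by ext n; simp [mul_div_assoc]

/-- Multiplication by `t / (1 - t)`, replacing coefficients by their strict partial sums. -/
noncomputable def partialSum : Module.End ℝ ℝ⟦X⟧ := LinearMap.mulLeft ℝ (X * PowerSeries.mk 1)

lemma coeff_euler (f : ℝ⟦X⟧) (n : ℕ) : coeff n (euler f) = n * coeff n f := by
  cases n with
  | zero => simp [euler]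
  | succ n => simp [euler, coeff_succ_X_mul, coeff_derivative, mul_comm]

lemma coeff_eulerInt (f : ℝ⟦X⟧) (n : ℕ) : coeff n (eulerInt f) = coeff n f / n := by
  simp [eulerInt]

lemma constantCoeff_eulerInt (f : ℝ⟦X⟧) : constantCoeff (eulerInt f) = 0 := by
  simp [← coeff_zero_eq_constantCoeff_apply, coeff_eulerInt, -coeff_zero_eq_constantCoeff]

lemma coeff_partialSum (f : ℝ⟦X⟧) (n : ℕ) :
    coeff n (partialSum f) = ∑ m ∈ range n, coeff m f := by
  cases n with
  | zero => simp [partialSum]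
  | succ n =>
    rw [partialSum, LinearMap.mulLeft_apply, mul_assoc, coeff_succ_X_mul, mul_comm, coeff_mul,
      Nat.sum_antidiagonal_eq_sum_range_succ_mk]
    simp

lemma coeff_eulerInt_pow (k : ℕ) (f : ℝ⟦X⟧) (n : ℕ) :
    coeff n ((eulerInt ^ k) f) = coeff n f / n ^ k := by
  induction k with
  | zero => simp
  | succ k ih => rw [pow_succ', Module.End.mul_apply, coeff_eulerInt, ih, pow_succ, div_div]

lemma euler_mul (f g : ℝ⟦X⟧) : euler (f * g) = euler f * g + f * euler g := by
  simp only [euler, LinearMap.coe_comp, Function.comp_apply, Derivation.coeFn_coe,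
    Derivation.leibniz, smul_eq_mul, LinearMap.mulLeft_apply]
  ring

lemma commute_euler_eulerInt : Commute euler eulerInt := by
  ext f n
  simp only [Module.End.mul_apply, coeff_euler, coeff_eulerInt]
  ring

lemma euler_mul_eulerInt_pow (k : ℕ) : euler * eulerInt ^ (k + 2) = eulerInt ^ (k + 1) := by
  ext f n
  simp only [Module.End.mul_apply, coeff_euler, coeff_eulerInt_pow]
  obtain rfl | hn := eq_or_ne n 0
  · simp
  · field_simp
    ring

lemma euler_eulerInt (f : ℝ⟦X⟧) (hf : constantCoeff f = 0) : euler (eulerInt f) = f := by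
  ext n
  rw [coeff_euler, coeff_eulerInt]
  obtain rfl | hn := eq_or_ne n 0
  · simpa using hf.symm
  · field_simp

/-- The operator series `θ_c = t d/dt - c y`. -/
noncomputable def twistedEuler (c : ℝ) : (Module.End ℝ ℝ⟦X⟧)⟦X⟧ := C euler - c • X

/-- The inverse `∑ cⁱ yⁱ (dt / t)ⁱ⁺¹` of `θ_c` on series without constant coefficient in `t`. -/
noncomputable def twistedInt (c : ℝ) : (Module.End ℝ ℝ⟦X⟧)⟦X⟧ :=
  mk fun i => c ^ i • eulerInt ^ (i + 1)

lemma twistedInt_zero : twistedInt 0 = C eulerInt := by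
  ext i : 1
  cases i <;> simp [twistedInt, coeff_C]

lemma twistedEuler_mul_twistedInt (c : ℝ) :
    twistedEuler c * twistedInt c = C (euler * eulerInt) := by
  ext n : 1
  cases n with
  | zero => simp [twistedEuler, twistedInt, sub_mul]
  | succ n =>
    simp [twistedEuler, twistedInt, sub_mul, coeff_succ_X_mul, euler_mul_eulerInt_pow, smul_smul,
      pow_succ' c]

lemma commute_twistedEuler_twistedInt (c : ℝ) : Commute (twistedEuler c) (twistedInt c) := by
  have hC : Commute (C euler) (twistedInt c) := by
    ext n : 1
    simp [twistedInt, (commute_euler_eulerInt.pow_right _).eq]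
  exact hC.sub_left ((commute_X _).symm.smul_left c)

/-- The ideal of series in `y` whose coefficients have no constant term in `t`. -/
noncomputable def augIdeal : Ideal ℝ⟦X⟧⟦X⟧ := RingHom.ker (PowerSeries.map constantCoeff)

lemma mem_augIdeal {F : ℝ⟦X⟧⟦X⟧} : F ∈ augIdeal ↔ ∀ b, constantCoeff (coeff b F) = 0 := by
  simp [augIdeal, RingHom.mem_ker, PowerSeries.ext_iff]

lemma seriesAct_euler_eulerInt {F : ℝ⟦X⟧⟦X⟧} (hF : F ∈ augIdeal) :
    seriesAct (C (euler * eulerInt)) F = F := by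
  ext b : 1
  rw [coeff_seriesAct_C, Module.End.mul_apply, euler_eulerInt _ (mem_augIdeal.1 hF b)]

lemma twistedEuler_twistedInt (c : ℝ) {F : ℝ⟦X⟧⟦X⟧} (hF : F ∈ augIdeal) :
    seriesAct (twistedEuler c) (seriesAct (twistedInt c) F) = F := by
  rw [← Module.End.mul_apply, ← map_mul, twistedEuler_mul_twistedInt, seriesAct_euler_eulerInt hF]

lemma eq_twistedInt_of_twistedEuler_eq {c : ℝ} {F G : ℝ⟦X⟧⟦X⟧} (hF : F ∈ augIdeal)
    (h : seriesAct (twistedEuler c) F = G) : F = seriesAct (twistedInt c) G := by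
  rw [← h, ← Module.End.mul_apply, ← map_mul, ← (commute_twistedEuler_twistedInt c).eq,
    twistedEuler_mul_twistedInt, seriesAct_euler_eulerInt hF]

lemma twistedInt_mem_augIdeal (c : ℝ) (F : ℝ⟦X⟧⟦X⟧) : seriesAct (twistedInt c) F ∈ augIdeal := by
  refine mem_augIdeal.2 fun b => ?_
  rw [coeff_seriesAct, map_sum]
  exact sum_eq_zero fun p _ => by
    simp [twistedInt, pow_succ' eulerInt, constantCoeff_eulerInt]

lemma seriesAct_C_euler_mul (F G : ℝ⟦X⟧⟦X⟧) :
    seriesAct (C euler) (F * G) = seriesAct (C euler) F * G + F * seriesAct (C euler) G := by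
  ext b : 1
  simp only [coeff_seriesAct_C, map_add, coeff_mul, map_sum, euler_mul, sum_add_distrib]

lemma seriesAct_twistedEuler (c : ℝ) (F : ℝ⟦X⟧⟦X⟧) :
    seriesAct (twistedEuler c) F = seriesAct (C euler) F - c • (X * F) := by
  rw [twistedEuler, map_sub, map_smul, LinearMap.sub_apply, LinearMap.smul_apply, seriesAct_X]

lemma twistedEuler_mul (c d : ℝ) (F G : ℝ⟦X⟧⟦X⟧) :
    seriesAct (twistedEuler (c + d)) (F * G) =
      seriesAct (twistedEuler c) F * G + F * seriesAct (twistedEuler d) G := by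
  simp only [seriesAct_twistedEuler, seriesAct_C_euler_mul, Algebra.smul_def, map_add]
  ring

end EulerOperators

section ProductIdentities

open PowerSeries

/-- The operator series `∑ cⁱ yⁱ (dt / t)ⁱ⁺¹ t / (1 - t)`, which appends one index to a nested
sum; `y` marks the excess of the index over `1`. -/
noncomputable def stepSeries (c : ℝ) : (Module.End ℝ ℝ⟦X⟧)⟦X⟧ := twistedInt c * C partialSum

/-- The generating function `φ_a` in `y` of the truncated nested sums
`∑_{α} Li_{α₀, …, α_{a-1}}(t)` over all index tuples of length `a`. -/
noncomputable def polylogSeries (a : ℕ) : ℝ⟦X⟧⟦X⟧ := seriesAct (stepSeries 1 ^ a) 1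

/-- The variant `γ_a = ∫ φ_{a+1} dt / t` of `φ_{a+1}` in which the last index is increased by
one. -/
noncomputable def polylogIncSeries (a : ℕ) : ℝ⟦X⟧⟦X⟧ :=
  seriesAct (twistedInt 0) (polylogSeries (a + 1))

lemma seriesAct_C_partialSum (F : ℝ⟦X⟧⟦X⟧) :
    seriesAct (C partialSum) F = C (X * PowerSeries.mk 1) * F := by
  ext b : 1
  rw [coeff_seriesAct_C, coeff_C_mul, partialSum, LinearMap.mulLeft_apply]

lemma C_X_mul_mem_augIdeal (f : ℝ⟦X⟧) (F : ℝ⟦X⟧⟦X⟧) : C (X * f) * F ∈ augIdeal :=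
  augIdeal.mul_mem_right _ (mem_augIdeal.2 fun b => by rw [coeff_C]; split_ifs <;> simp)

lemma seriesAct_stepSeries (c : ℝ) (F : ℝ⟦X⟧⟦X⟧) :
    seriesAct (stepSeries c) F = seriesAct (twistedInt c) (C (X * PowerSeries.mk 1) * F) := by
  rw [stepSeries, map_mul, Module.End.mul_apply, seriesAct_C_partialSum]

lemma polylogSeries_zero : polylogSeries 0 = 1 := by simp [polylogSeries]

lemma polylogSeries_succ (a : ℕ) :
    polylogSeries (a + 1) = seriesAct (stepSeries 1) (polylogSeries a) := by
  rw [polylogSeries, pow_succ', map_mul, Module.End.mul_apply, polylogSeries]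

lemma polylogSeries_succ_mem (a : ℕ) : polylogSeries (a + 1) ∈ augIdeal := by
  rw [polylogSeries_succ, seriesAct_stepSeries]
  exact twistedInt_mem_augIdeal _ _

lemma twistedEuler_polylogSeries_succ (a : ℕ) :
    seriesAct (twistedEuler 1) (polylogSeries (a + 1)) =
      C (X * PowerSeries.mk 1) * polylogSeries a := by
  rw [polylogSeries_succ, seriesAct_stepSeries,
    twistedEuler_twistedInt _ (C_X_mul_mem_augIdeal _ _)]

lemma twistedEuler_polylogIncSeries (a : ℕ) :
    seriesAct (twistedEuler 0) (polylogIncSeries a) = polylogSeries (a + 1) :=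
  twistedEuler_twistedInt _ (polylogSeries_succ_mem a)

lemma polylogIncSeries_mul_polylogIncSeries (a b : ℕ) :
    polylogIncSeries a * polylogIncSeries b =
      seriesAct (twistedInt 0) (polylogSeries (a + 1) * polylogIncSeries b +
        polylogIncSeries a * polylogSeries (b + 1)) := by
  refine eq_twistedInt_of_twistedEuler_eq
    (augIdeal.mul_mem_right _ (twistedInt_mem_augIdeal _ _)) ?_
  have h := twistedEuler_mul 0 0 (polylogIncSeries a) (polylogIncSeries b)
  rwa [add_zero, twistedEuler_polylogIncSeries, twistedEuler_polylogIncSeries] at h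

lemma polylogSeries_succ_mul_polylogIncSeries (a b : ℕ) :
    polylogSeries (a + 1) * polylogIncSeries b =
      seriesAct (stepSeries 1) (polylogSeries a * polylogIncSeries b) +
        seriesAct (twistedInt 1) (polylogSeries (a + 1) * polylogSeries (b + 1)) := by
  rw [seriesAct_stepSeries, ← map_add, ← mul_assoc]
  refine eq_twistedInt_of_twistedEuler_eq
    (augIdeal.mul_mem_right _ (polylogSeries_succ_mem a)) ?_
  have h := twistedEuler_mul 1 0 (polylogSeries (a + 1)) (polylogIncSeries b)
  rwa [add_zero, twistedEuler_polylogIncSeries, twistedEuler_polylogSeries_succ] at h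

lemma polylogSeries_succ_mul_polylogSeries_succ (a b : ℕ) :
    polylogSeries (a + 1) * polylogSeries (b + 1) =
      seriesAct (stepSeries 2) (polylogSeries a * polylogSeries (b + 1) +
        polylogSeries (a + 1) * polylogSeries b) := by
  rw [seriesAct_stepSeries]
  refine eq_twistedInt_of_twistedEuler_eq
    (augIdeal.mul_mem_right _ (polylogSeries_succ_mem a)) ?_
  have h := twistedEuler_mul 1 1 (polylogSeries (a + 1)) (polylogSeries (b + 1))
  rw [one_add_one_eq_two, twistedEuler_polylogSeries_succ, twistedEuler_polylogSeries_succ] at h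
  rw [h]
  ring

lemma polylogSeries_succ_mul_polylogIncSeries_eq_sum (a b : ℕ) :
    polylogSeries (a + 1) * polylogIncSeries b =
      seriesAct (stepSeries 1 ^ (a + 1)) (polylogIncSeries b) +
        ∑ p ∈ antidiagonal a, seriesAct (stepSeries 1 ^ p.2 * twistedInt 1)
          (polylogSeries (p.1 + 1) * polylogSeries (b + 1)) := by
  induction a with
  | zero =>
    rw [polylogSeries_succ_mul_polylogIncSeries]
    simp [polylogSeries_zero]
  | succ a ih =>
    rw [polylogSeries_succ_mul_polylogIncSeries, ih, Nat.sum_antidiagonal_succ', map_add, map_sum]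
    simp only [pow_succ' _ _, pow_zero, one_mul, map_mul, Module.End.mul_apply]
    abel

/-- The weighted convolution `∑_{i+j=k} x^i y^j φ_{i+1} φ_{j+1}`. -/
noncomputable def polylogConv (x y : ℝ) (k : ℕ) : ℝ⟦X⟧⟦X⟧ :=
  ∑ p ∈ antidiagonal k, (x ^ p.1 * y ^ p.2) • (polylogSeries (p.1 + 1) * polylogSeries (p.2 + 1))

lemma polylogConv_swap (x y : ℝ) (k : ℕ) : polylogConv x y k = polylogConv y x k := by
  rw [polylogConv, ← Nat.sum_antidiagonal_swap, polylogConv]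
  simp only [Prod.fst_swap, Prod.snd_swap, mul_comm]

lemma polylogConv_succ (x y : ℝ) (k : ℕ) :
    polylogConv x y (k + 1) = seriesAct (stepSeries 2)
      ((x + y) • polylogConv x y k + (x ^ (k + 1) + y ^ (k + 1)) • polylogSeries (k + 2)) := by
  have hleft : ∑ p ∈ antidiagonal (k + 1),
      (x ^ p.1 * y ^ p.2) • (polylogSeries p.1 * polylogSeries (p.2 + 1)) =
        y ^ (k + 1) • polylogSeries (k + 2) + x • polylogConv x y k := by
    simp [Nat.sum_antidiagonal_succ, polylogSeries_zero, polylogConv, smul_sum, smul_smul,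
      pow_succ' x, mul_assoc]
  have hright : ∑ p ∈ antidiagonal (k + 1),
      (x ^ p.1 * y ^ p.2) • (polylogSeries (p.1 + 1) * polylogSeries p.2) =
        x ^ (k + 1) • polylogSeries (k + 2) + y • polylogConv x y k := by
    simp [Nat.sum_antidiagonal_succ', polylogSeries_zero, polylogConv, smul_sum, smul_smul,
      pow_succ' y, mul_left_comm]
  rw [polylogConv]
  simp only [polylogSeries_succ_mul_polylogSeries_succ, ← map_smul, ← map_sum, smul_add,
    sum_add_distrib]
  rw [hleft, hright]
  congr 1
  module

lemma polylogConv_eq_sum (x y : ℝ) (k : ℕ) :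
    polylogConv x y k = ∑ p ∈ antidiagonal k, ((x + y) ^ p.1 * (x ^ p.2 + y ^ p.2)) •
      seriesAct (stepSeries 2 ^ (p.1 + 1)) (polylogSeries (p.2 + 1)) := by
  induction k with
  | zero =>
    simp [polylogConv, polylogSeries_succ_mul_polylogSeries_succ 0 0, polylogSeries_zero, add_smul]
  | succ k ih =>
    rw [polylogConv_succ, ih, Nat.sum_antidiagonal_succ, map_add, map_smul, map_sum, smul_sum,
      add_comm]
    simp only [pow_succ', map_mul, Module.End.mul_apply, map_smul, smul_smul, mul_assoc, pow_zero,
      one_mul, mul_one]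

lemma sum_smul_polylogIncSeries_mul_polylogIncSeries (x y : ℝ) (k : ℕ) :
    ∑ a ∈ antidiagonal k, (x ^ a.1 * y ^ a.2) • (polylogIncSeries a.1 * polylogIncSeries a.2) =
      seriesAct (twistedInt 0) (∑ a ∈ antidiagonal k, (x ^ a.1 * y ^ a.2 + y ^ a.1 * x ^ a.2) •
        (polylogSeries (a.2 + 1) * polylogIncSeries a.1)) := by
  have hswap : ∑ a ∈ antidiagonal k,
      (x ^ a.1 * y ^ a.2) • (polylogSeries (a.1 + 1) * polylogIncSeries a.2) =
        ∑ a ∈ antidiagonal k,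
          (y ^ a.1 * x ^ a.2) • (polylogSeries (a.2 + 1) * polylogIncSeries a.1) := by
    rw [← Nat.sum_antidiagonal_swap]
    simp only [Prod.fst_swap, Prod.snd_swap, mul_comm (x ^ _)]
  simp only [polylogIncSeries_mul_polylogIncSeries, ← map_smul, ← map_sum, smul_add, add_smul,
    sum_add_distrib, hswap]
  simp only [add_comm, mul_comm (polylogIncSeries _)]

lemma sum_smul_polylogSeries_mul_polylogIncSeries (x y : ℝ) (k : ℕ) :
    ∑ a ∈ antidiagonal k, (x ^ a.1 * y ^ a.2 + y ^ a.1 * x ^ a.2) •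
        (polylogSeries (a.2 + 1) * polylogIncSeries a.1) =
      ∑ a ∈ antidiagonal k, (x ^ a.1 * y ^ a.2 + y ^ a.1 * x ^ a.2) •
        seriesAct (stepSeries 1 ^ (a.2 + 1)) (polylogIncSeries a.1) +
      ∑ p ∈ antidiagonal k, (x ^ p.1 + y ^ p.1) •
        seriesAct (stepSeries 1 ^ p.1 * twistedInt 1) (polylogConv x y p.2) := by
  have hregroup : ∑ a ∈ antidiagonal k, ∑ p ∈ antidiagonal a.2,
      (x ^ a.1 * y ^ a.2 + y ^ a.1 * x ^ a.2) • seriesAct (stepSeries 1 ^ p.2 * twistedInt 1)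
        (polylogSeries (p.1 + 1) * polylogSeries (a.1 + 1)) =
      ∑ p ∈ antidiagonal k, ∑ q ∈ antidiagonal p.2,
        (x ^ q.2 * y ^ (q.1 + p.1) + y ^ q.2 * x ^ (q.1 + p.1)) •
          seriesAct (stepSeries 1 ^ p.1 * twistedInt 1)
            (polylogSeries (q.1 + 1) * polylogSeries (q.2 + 1)) := by
    rw [← sum_antidiagonal_reverse fun i j l => (x ^ i * y ^ (j + l) + y ^ i * x ^ (j + l)) •
      seriesAct (stepSeries 1 ^ l * twistedInt 1) (polylogSeries (j + 1) * polylogSeries (i + 1))]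
    exact sum_congr rfl fun a _ => sum_congr rfl fun p hp => by rw [mem_antidiagonal.1 hp]
  have hconv (m i : ℕ) : ∑ q ∈ antidiagonal m,
      (x ^ q.2 * y ^ (q.1 + i) + y ^ q.2 * x ^ (q.1 + i)) •
        (polylogSeries (q.1 + 1) * polylogSeries (q.2 + 1)) =
      (x ^ i + y ^ i) • polylogConv x y m := by
    rw [add_smul]
    nth_rw 2 [polylogConv_swap]
    simp only [polylogConv, smul_sum, ← sum_add_distrib, smul_smul, ← add_smul]
    exact sum_congr rfl fun q _ => by ring_nf
  simp only [polylogSeries_succ_mul_polylogIncSeries_eq_sum, smul_add, sum_add_distrib, smul_sum]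
  rw [hregroup]
  simp only [← map_smul, ← map_sum, hconv]

lemma sum_smul_polylogIncSeries_mul_eq_sum (x y : ℝ) (k : ℕ) :
    ∑ a ∈ antidiagonal k, (x ^ a.1 * y ^ a.2) • (polylogIncSeries a.1 * polylogIncSeries a.2) =
      seriesAct (twistedInt 0) (∑ a ∈ antidiagonal k, (x ^ a.1 * y ^ a.2 + y ^ a.1 * x ^ a.2) •
        seriesAct (stepSeries 1 ^ (a.2 + 1)) (polylogIncSeries a.1) +
      ∑ a ∈ antidiagonal k, ∑ a' ∈ antidiagonal a.2,
        ((x ^ a.1 + y ^ a.1) * (x + y) ^ a'.1 * (x ^ a'.2 + y ^ a'.2)) •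
          seriesAct (stepSeries 1 ^ a'.2 * twistedInt 1 * stepSeries 2 ^ (a'.1 + 1))
            (polylogSeries (a.1 + 1))) := by
  rw [sum_smul_polylogIncSeries_mul_polylogIncSeries, sum_smul_polylogSeries_mul_polylogIncSeries]
  rw [sum_antidiagonal_reverse fun i j l => ((x ^ i + y ^ i) * (x + y) ^ j * (x ^ l + y ^ l)) •
    seriesAct (stepSeries 1 ^ l * twistedInt 1 * stepSeries 2 ^ (j + 1)) (polylogSeries (i + 1))]
  simp only [polylogConv_eq_sum, map_sum, map_mul, map_smul, Module.End.mul_apply, smul_sum,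
    smul_smul]
  congr! 5
  ring

end ProductIdentities

section DoubleSeries

open Filter Topology

lemma hasSum_swap {α β : Type*} {f : α → β → ℝ} {g : α → ℝ} {h : β → ℝ} {s : ℝ}
    (hf : ∀ a b, 0 ≤ f a b) (hg : ∀ a, HasSum (f a) (g a)) (hh : ∀ b, HasSum (fun a => f a b) (h b))
    (hs : HasSum g s) : HasSum h s := by
  have hF : Summable fun p : α × β => f p.1 p.2 :=
    (summable_prod_of_nonneg fun p => hf p.1 p.2).2
      ⟨fun a => (hg a).summable, by simpa only [(hg _).tsum_eq] using hs.summable⟩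
  have hFs : HasSum (fun p : α × β => f p.1 p.2) s :=
    hs.unique (hF.hasSum.prod_fiberwise hg) ▸ hF.hasSum
  exact ((Equiv.prodComm β α).hasSum_iff.2 hFs).prod_fiberwise hh

lemma hasSum_sum_antidiagonal_mul {f g : ℕ → ℝ} {s t : ℝ} (hf : HasSum f s) (hg : HasSum g t) :
    HasSum (fun n => ∑ p ∈ antidiagonal n, f p.1 * g p.2) (s * t) := by
  rw [← hf.tsum_eq, ← hg.tsum_eq, tsum_mul_tsum_eq_tsum_sum_antidiagonal_of_summable_norm
    hf.summable.norm hg.summable.norm]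
  exact (summable_norm_sum_mul_antidiagonal_of_summable_norm
    hf.summable.norm hg.summable.norm).of_norm.hasSum

lemma hasSum_sub_succ {F : ℕ → ℝ} (hF : Antitone F) (h : Tendsto F atTop (𝓝 0)) :
    HasSum (fun n => F n - F (n + 1)) (F 0) := by
  rw [hasSum_iff_tendsto_nat_of_nonneg fun n => sub_nonneg.2 (hF n.le_succ)]
  simpa only [sum_range_sub', sub_zero] using h.const_sub (F 0)

lemma summable_sum_range_mul {u v : ℕ → ℝ} (hu : Summable u) (hv : Summable v) :
    Summable fun n => (∑ m ∈ range n, u m) * v n := by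
  refine .of_norm_bounded (hv.norm.mul_left (∑' m, ‖u m‖)) fun n => ?_
  rw [norm_mul]
  gcongr
  exact (norm_sum_le _ _).trans (hu.norm.sum_le_tsum _ fun m _ => norm_nonneg _)

lemma tsum_mul_tsum_eq_tsum_stuffle {u v : ℕ → ℝ} (hu : Summable u) (hv : Summable v) :
    (∑' n, u n) * ∑' n, v n = ∑' n, (∑ m ∈ range n, u m) * v n +
      ∑' n, (∑ m ∈ range n, v m) * u n + ∑' n, u n * v n := by
  have huv : Summable fun n => u n * v n := by
    refine .of_norm_bounded (hv.norm.mul_left (∑' m, ‖u m‖)) fun n => ?_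
    rw [norm_mul]
    gcongr
    exact hu.norm.le_tsum n fun m _ => norm_nonneg _
  have hsum := ((summable_sum_range_mul hu hv).hasSum.add
    (summable_sum_range_mul hv hu).hasSum).add huv.hasSum
  refine tendsto_nhds_unique (hu.hasSum.tendsto_sum_nat.mul hv.hasSum.tendsto_sum_nat)
    (hsum.tendsto_sum_nat.congr fun N => ?_)
  induction N with
  | zero => simp
  | succ N ih =>
    simp only [sum_range_succ, ih]
    ring

lemma eq_zero_of_hasSum_pow_mul_zero {d : ℕ → ℝ}
    (h : ∀ y ∈ Set.Ico (0 : ℝ) 1, HasSum (fun b => y ^ b * d b) 0) : d = 0 := by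
  let p := FormalMultilinearSeries.ofScalars ℝ d
  have hradius : ((1 / 2 : NNReal) : ENNReal) ≤ p.radius := by
    refine p.le_radius_of_summable ((h (1 / 2) (by norm_num)).summable.norm.congr fun b => ?_)
    simp [p, mul_comm]
  have hp : HasFPowerSeriesAt p.sum p 0 :=
    (p.hasFPowerSeriesOnBall (lt_of_lt_of_le (by norm_num) hradius)).hasFPowerSeriesAt
  have hzero : ∀ᶠ y in 𝓝[>] 0, p.sum y = 0 := by
    filter_upwards [Ioo_mem_nhdsGT one_pos] with y hy
    rw [← (h y ⟨hy.1.le, hy.2⟩).tsum_eq]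
    exact tsum_congr fun b => by simp [p, mul_comm]
  have hp0 : p = 0 := hp.eq_zero_of_eventually <|
    hp.analyticAt.frequently_zero_iff_eventually_zero.1 <|
      hzero.frequently.filter_mono (nhdsWithin_mono 0 fun y hy => ne_of_gt hy)
  exact (FormalMultilinearSeries.ofScalars_series_eq_zero ℝ).1 hp0

end DoubleSeries

section Evaluation

open PowerSeries

/-- The power series whose value at `1` converges. -/
noncomputable def summableAtOne : Submodule ℝ ℝ⟦X⟧ where
  carrier := {f | Summable fun n => coeff n f}
  zero_mem' := by simp
  add_mem' hf hg := by simpa using hf.add hg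
  smul_mem' c f hf := by simpa using hf.mul_left c

lemma mem_summableAtOne {f : ℝ⟦X⟧} : f ∈ summableAtOne ↔ Summable fun n => coeff n f := Iff.rfl

lemma exists_linearMap_eq_tsum :
    ∃ e : ℝ⟦X⟧ →ₗ[ℝ] ℝ, ∀ f ∈ summableAtOne, e f = ∑' n, coeff n f := by
  let e₀ : summableAtOne →ₗ[ℝ] ℝ :=
    { toFun f := ∑' n, coeff n f.1
      map_add' f g := by simpa using f.2.tsum_add g.2
      map_smul' c f := by simp [tsum_mul_left] }
  obtain ⟨e, he⟩ := e₀.exists_extend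
  exact ⟨e, fun f hf => LinearMap.congr_fun he ⟨f, hf⟩⟩

/-- Evaluation of power series at `1`, extended arbitrarily but linearly to divergent series, so
that additivity needs no convergence hypotheses. -/
noncomputable def evalOne : ℝ⟦X⟧ →ₗ[ℝ] ℝ := exists_linearMap_eq_tsum.choose

lemma evalOne_eq_tsum {f : ℝ⟦X⟧} (hf : f ∈ summableAtOne) : evalOne f = ∑' n, coeff n f :=
  exists_linearMap_eq_tsum.choose_spec f hf

lemma evalOne_mul {f g : ℝ⟦X⟧} (hf : f ∈ summableAtOne) (hg : g ∈ summableAtOne) :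
    evalOne (f * g) = evalOne f * evalOne g := by
  have h : HasSum (fun n => coeff n (f * g)) (evalOne f * evalOne g) := by
    rw [evalOne_eq_tsum hf, evalOne_eq_tsum hg]
    simpa only [coeff_mul] using hasSum_sum_antidiagonal_mul
      (mem_summableAtOne.1 hf).hasSum (mem_summableAtOne.1 hg).hasSum
  rw [evalOne_eq_tsum (mem_summableAtOne.2 h.summable), h.tsum_eq]

/-- The power series integrable against `dt / t` up to `t = 1`. -/
noncomputable def integrableAtOne : Submodule ℝ ℝ⟦X⟧ := summableAtOne.comap eulerInt

lemma mem_integrableAtOne {f : ℝ⟦X⟧} :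
    f ∈ integrableAtOne ↔ Summable fun n : ℕ => |coeff n f| / n := by
  rw [integrableAtOne, Submodule.mem_comap, mem_summableAtOne, ← summable_abs_iff]
  simp only [coeff_eulerInt, abs_div, Nat.abs_cast]

lemma one_mem_integrableAtOne : 1 ∈ integrableAtOne := by
  refine mem_integrableAtOne.2 (summable_of_ne_finset_zero (s := {0}) fun n hn => ?_)
  simp_all [coeff_one]

lemma eulerInt_mem_integrableAtOne {f : ℝ⟦X⟧} (hf : f ∈ integrableAtOne) :
    eulerInt f ∈ integrableAtOne := by
  rw [mem_integrableAtOne] at hf ⊢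
  refine hf.of_nonneg_of_le (fun n => by positivity) fun n => ?_
  rw [coeff_eulerInt, abs_div, Nat.abs_cast]
  exact div_le_div_of_nonneg_right (div_nat_le_self_of_nonnneg (abs_nonneg _) n) n.cast_nonneg

lemma sum_range_sum_range_div_sq_le {u : ℕ → ℝ} (hu : 0 ≤ u) (N : ℕ) :
    ∑ n ∈ range N, (∑ m ∈ range n, u m) / n ^ 2 ≤ ∑ m ∈ range N, u m * (2 / (m + 1)) := by
  calc ∑ n ∈ range N, (∑ m ∈ range n, u m) / (n : ℝ) ^ 2
      = ∑ m ∈ range N, u m * ∑ n ∈ Ioo m N, ((n : ℝ) ^ 2)⁻¹ := by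
        simp only [div_eq_mul_inv, sum_mul, mul_sum]
        exact sum_comm' fun n m => by simp; omega
    _ ≤ ∑ m ∈ range N, u m * (2 / (m + 1)) := by
        gcongr with m
        · exact hu m
        · exact sum_Ioo_inv_sq_le m N

lemma eulerInt_partialSum_mem_integrableAtOne {f : ℝ⟦X⟧} (hf : f ∈ integrableAtOne) :
    eulerInt (partialSum f) ∈ integrableAtOne := by
  have hsum : Summable fun m : ℕ => |coeff m f| * (2 / (m + 1 : ℝ)) := by
    refine (summable_nat_add_iff 1).1 ?_
    refine (((summable_nat_add_iff 1).2 (mem_integrableAtOne.1 hf)).mul_left 2).of_nonneg_of_le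
      (fun m => by positivity) fun m => ?_
    have h : 2 / (((m + 1 : ℕ) : ℝ) + 1) ≤ 2 / ((m + 1 : ℕ) : ℝ) := by gcongr; simp
    calc _ ≤ |coeff (m + 1) f| * (2 / ((m + 1 : ℕ) : ℝ)) := by gcongr
      _ = _ := by ring
  rw [mem_integrableAtOne]
  refine summable_of_sum_range_le (c := ∑' m : ℕ, |coeff m f| * (2 / (m + 1 : ℝ)))
    (fun n => by positivity) fun N => ?_
  calc ∑ n ∈ range N, |coeff n (eulerInt (partialSum f))| / n
      ≤ ∑ n ∈ range N, (∑ m ∈ range n, |coeff m f|) / (n : ℝ) ^ 2 := by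
        refine sum_le_sum fun n _ => ?_
        rw [coeff_eulerInt, coeff_partialSum, abs_div, Nat.abs_cast, div_div, ← sq]
        exact div_le_div_of_nonneg_right (abs_sum_le_sum_abs _ _) (sq_nonneg _)
    _ ≤ ∑ m ∈ range N, |coeff m f| * (2 / (m + 1)) :=
        sum_range_sum_range_div_sq_le (fun m => abs_nonneg _) N
    _ ≤ _ := hsum.sum_le_tsum _ fun m _ => by positivity

end Evaluation

section NestedSums

open PowerSeries

/-- The operator `h ↦ (∑_{m < n} h_m) / n ^ k` adding one summation with exponent `k` to a nested
sum. -/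
noncomputable def nestOp (k : ℕ) : Module.End ℝ ℝ⟦X⟧ := eulerInt ^ k * partialSum

/-- The nested summation with exponents `α`, innermost first: applied to `1`, its coefficient at
`n` is the part of the series for `ζ(α)` whose largest summation index is `n`. -/
noncomputable def nestedSum {n : ℕ} (α : Fin n → ℕ) : Module.End ℝ ℝ⟦X⟧ :=
  (List.ofFn fun i => nestOp (α i)).reverse.prod

lemma nestOp_add (k c : ℕ) : nestOp (k + c) = eulerInt ^ c * nestOp k := by
  rw [nestOp, nestOp, add_comm, pow_add, mul_assoc]

lemma nestedSum_zero (α : Fin 0 → ℕ) : nestedSum α = 1 := by simp [nestedSum]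

lemma nestedSum_cons {n : ℕ} (k : ℕ) (α : Fin n → ℕ) :
    nestedSum (Fin.cons k α : Fin (n + 1) → ℕ) = nestedSum α * nestOp k := by
  simp [nestedSum, List.ofFn_succ]

lemma nestedSum_eq_tail_mul {n : ℕ} (α : Fin (n + 1) → ℕ) :
    nestedSum α = nestedSum (Fin.tail α) * nestOp (α 0) := by
  rw [← nestedSum_cons, Fin.cons_self_tail]

lemma nestedSum_eq_mul_init {n : ℕ} (α : Fin (n + 1) → ℕ) :
    nestedSum α = nestOp (α (Fin.last n)) * nestedSum (Fin.init α) := by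
  rw [nestedSum, List.ofFn_succ', List.concat_eq_append, List.reverse_concat, List.prod_cons]
  rfl

lemma nestedSum_append {m n : ℕ} (α : Fin m → ℕ) (β : Fin n → ℕ) :
    nestedSum (Fin.append α β) = nestedSum β * nestedSum α := by
  have h : (fun i => nestOp (Fin.append α β i)) =
      Fin.append (fun i => nestOp (α i)) fun i => nestOp (β i) := by
    ext i : 1
    exact Fin.addCases (fun i => by simp) (fun i => by simp) i
  rw [nestedSum, h, List.ofFn_fin_append, List.reverse_append, List.prod_append, nestedSum,
    nestedSum]

lemma nestedSum_update_last {n : ℕ} (α : Fin (n + 1) → ℕ) (c : ℕ) :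
    nestedSum (Function.update α (Fin.last n) (α (Fin.last n) + c)) =
      eulerInt ^ c * nestedSum α := by
  rw [nestedSum_eq_mul_init, nestedSum_eq_mul_init α, Fin.init_update_last, Function.update_self,
    nestOp_add, mul_assoc]

lemma incLast_eq_update {n : ℕ} (α : Fin (n + 1) → ℕ) :
    incLast α = Function.update α (Fin.last n) (α (Fin.last n) + 1) := by
  ext i
  by_cases h : i = Fin.last n
  · simp [h, incLast]
  · have hi : (i : ℕ) ≠ n := fun hi => h (Fin.ext hi)
    simp [incLast, h, hi]

lemma nestedSum_incLast {n : ℕ} (hn : 0 < n) (α : Fin n → ℕ) :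
    nestedSum (incLast α) = eulerInt * nestedSum α := by
  obtain ⟨n, rfl⟩ := Nat.exists_eq_succ_of_ne_zero hn.ne'
  rw [incLast_eq_update, nestedSum_update_last, pow_one]

lemma coeff_nestOp (k : ℕ) (f : ℝ⟦X⟧) (n : ℕ) :
    coeff n (nestOp k f) = (∑ m ∈ range n, coeff m f) / n ^ k := by
  rw [nestOp, Module.End.mul_apply, coeff_eulerInt_pow, coeff_partialSum]

lemma coeff_nestOp_nonneg (k : ℕ) {f : ℝ⟦X⟧} (hf : ∀ n, 0 ≤ coeff n f) (n : ℕ) :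
    0 ≤ coeff n (nestOp k f) := by
  rw [coeff_nestOp]
  exact div_nonneg (sum_nonneg fun m _ => hf m) (by positivity)

lemma coeff_nestedSum_nonneg {d : ℕ} (α : Fin d → ℕ) {f : ℝ⟦X⟧} (hf : ∀ n, 0 ≤ coeff n f) (n : ℕ) :
    0 ≤ coeff n (nestedSum α f) := by
  induction d generalizing f with
  | zero => simpa [nestedSum_zero] using hf n
  | succ d ih =>
    rw [nestedSum_eq_tail_mul]
    exact ih _ (coeff_nestOp_nonneg _ hf)

open scoped Classical in
/-- The part of the series for `ζ(α)` with all summation indices above `m`, as an extended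
nonnegative real. -/
noncomputable def mzvAbove {d : ℕ} (α : Fin d → ℕ) (m : ℕ) : ENNReal :=
  ∑' ℓ : Fin d → ℕ, if StrictMono ℓ ∧ ∀ i, m < ℓ i then
    ENNReal.ofReal (∏ i, ((ℓ i : ℝ) ^ α i)⁻¹) else 0

lemma mzvAbove_zero (α : Fin 0 → ℕ) (m : ℕ) : mzvAbove α m = 1 := by
  simp [mzvAbove, Subsingleton.strictMono]

lemma mzvAbove_succ {d : ℕ} (α : Fin (d + 1) → ℕ) (m : ℕ) :
    mzvAbove α m = ∑' n, if m < n then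
      ENNReal.ofReal ((n : ℝ) ^ α 0)⁻¹ * mzvAbove (Fin.tail α) n else 0 := by
  classical
  have hcons (n : ℕ) (ℓ : Fin d → ℕ) :
      (StrictMono (Fin.consEquiv (fun _ => ℕ) (n, ℓ)) ∧
        ∀ i, m < Fin.consEquiv (fun _ => ℕ) (n, ℓ) i) ↔ m < n ∧ StrictMono ℓ ∧ ∀ i, n < ℓ i := by
    change (StrictMono (Fin.cons n ℓ : Fin (d + 1) → ℕ) ∧ _) ↔ _
    rw [Fin.strictMono_cons, Fin.forall_fin_succ]
    simp only [Fin.consEquiv_apply, Fin.cons_zero, Fin.cons_succ]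
    exact ⟨fun h => ⟨h.2.1, h.1.2, h.1.1⟩,
      fun h => ⟨⟨h.2.2, h.2.1⟩, h.1, fun i => h.1.trans (h.2.2 i)⟩⟩
  rw [mzvAbove, ← (Fin.consEquiv fun _ => ℕ).tsum_eq, ENNReal.tsum_prod']
  refine tsum_congr fun n => ?_
  simp only [hcons]
  split_ifs with hmn
  · rw [mzvAbove, ← ENNReal.tsum_mul_left]
    refine tsum_congr fun ℓ => ?_
    rw [Fin.prod_univ_succ, ENNReal.ofReal_mul (by positivity)]
    simp [hmn, Fin.tail]
  · simp [hmn]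

lemma tsum_ofReal_coeff_nestedSum {d : ℕ} (α : Fin d → ℕ) {f : ℝ⟦X⟧} (hf : ∀ n, 0 ≤ coeff n f) :
    ∑' n, ENNReal.ofReal (coeff n (nestedSum α f)) =
      ∑' m, ENNReal.ofReal (coeff m f) * mzvAbove α m := by
  induction d generalizing f with
  | zero => simp [nestedSum_zero, mzvAbove_zero]
  | succ d ih =>
    rw [nestedSum_eq_tail_mul, Module.End.mul_apply, ih _ (coeff_nestOp_nonneg _ hf)]
    have hterm (m : ℕ) : ENNReal.ofReal (coeff m (nestOp (α 0) f)) * mzvAbove (Fin.tail α) m =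
        ∑' j, ENNReal.ofReal (coeff j f) * if j < m then
          ENNReal.ofReal ((m : ℝ) ^ α 0)⁻¹ * mzvAbove (Fin.tail α) m else 0 := by
      rw [coeff_nestOp, div_eq_mul_inv, ENNReal.ofReal_mul (sum_nonneg fun j _ => hf j),
        ENNReal.ofReal_sum_of_nonneg fun j _ => hf j, mul_assoc, sum_mul,
        tsum_eq_sum (s := range m) (by simp +contextual)]
      exact sum_congr rfl fun j hj => by rw [if_pos (mem_range.1 hj)]
    simp only [hterm, mzvAbove_succ α, ← ENNReal.tsum_mul_left]
    exact ENNReal.tsum_comm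

lemma mzv_eq_toReal_mzvAbove {d : ℕ} (α : Fin d → ℕ) : mzv α = (mzvAbove α 0).toReal := by
  classical
  rw [mzvAbove, ENNReal.tsum_toReal_eq fun ℓ => by split_ifs <;> simp]
  let s := {ℓ : Fin d → ℕ | StrictMono ℓ ∧ ∀ i, 0 < ℓ i}
  let f (ℓ : Fin d → ℕ) := ∏ i, ((ℓ i : ℝ) ^ α i)⁻¹
  refine (tsum_subtype s f).trans (tsum_congr fun ℓ => ?_)
  have hf : 0 ≤ f ℓ := prod_nonneg fun i _ => by positivity
  by_cases h : StrictMono ℓ ∧ ∀ i, 0 < ℓ i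
  · have hs : ℓ ∈ s := h
    rw [Set.indicator_of_mem hs, if_pos h, ENNReal.toReal_ofReal hf]
  · have hs : ℓ ∉ s := h
    rw [Set.indicator_of_notMem hs, if_neg h, ENNReal.toReal_zero]

lemma coeff_one_nonneg (n : ℕ) : 0 ≤ coeff n (1 : ℝ⟦X⟧) := by
  rw [coeff_one]
  positivity

lemma mzv_eq_tsum_coeff {d : ℕ} (α : Fin d → ℕ) : mzv α = ∑' n, coeff n (nestedSum α 1) := by
  have habove : ∑' m, ENNReal.ofReal (coeff m (1 : ℝ⟦X⟧)) * mzvAbove α m = mzvAbove α 0 := by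
    rw [tsum_eq_single 0 fun m hm => by simp [coeff_one, hm], coeff_zero_one, ENNReal.ofReal_one,
      one_mul]
  rw [mzv_eq_toReal_mzvAbove, ← habove, ← tsum_ofReal_coeff_nestedSum α coeff_one_nonneg,
    ENNReal.tsum_toReal_eq fun n => ENNReal.ofReal_ne_top]
  exact tsum_congr fun n => ENNReal.toReal_ofReal (coeff_nestedSum_nonneg α coeff_one_nonneg n)

lemma coeff_nestOp_one {k : ℕ} (hk : 0 < k) (n : ℕ) :
    coeff n (nestOp k 1) = ((n : ℝ) ^ k)⁻¹ := by
  rw [coeff_nestOp]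
  cases n with
  | zero => simp [hk.ne']
  | succ n => simp [coeff_one]

lemma mzv_singleton {k : ℕ} (hk : 0 < k) : mzv ![k] = ∑' n : ℕ, ((n : ℝ) ^ k)⁻¹ := by
  rw [mzv_eq_tsum_coeff]
  refine tsum_congr fun n => ?_
  rw [← coeff_nestOp_one hk]
  simp [nestedSum]

lemma mzv_pair {k l : ℕ} (hk : 0 < k) :
    mzv ![k, l] = ∑' n : ℕ, (∑ m ∈ range n, ((m : ℝ) ^ k)⁻¹) * ((n : ℝ) ^ l)⁻¹ := by
  rw [mzv_eq_tsum_coeff]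
  refine tsum_congr fun n => ?_
  simp only [← coeff_nestOp_one hk, ← div_eq_mul_inv]
  rw [← coeff_nestOp]
  simp [nestedSum]

lemma mzv_eq_evalOne {d : ℕ} {α : Fin d → ℕ} (h : nestedSum α 1 ∈ summableAtOne) :
    mzv α = evalOne (nestedSum α 1) := by
  rw [evalOne_eq_tsum h, mzv_eq_tsum_coeff]

lemma nestOp_mem_integrableAtOne {k : ℕ} (hk : 0 < k) {f : ℝ⟦X⟧} (hf : f ∈ integrableAtOne) :
    nestOp k f ∈ integrableAtOne := by
  induction k, hk using Nat.le_induction with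
  | base => simpa [nestOp] using eulerInt_partialSum_mem_integrableAtOne hf
  | succ k _ ih =>
    rw [nestOp_add, pow_one]
    exact eulerInt_mem_integrableAtOne ih

lemma nestedSum_mem_integrableAtOne {n : ℕ} {α : Fin n → ℕ} (hα : ∀ i, 0 < α i) {f : ℝ⟦X⟧}
    (hf : f ∈ integrableAtOne) : nestedSum α f ∈ integrableAtOne := by
  induction n generalizing f with
  | zero => simpa [nestedSum_zero] using hf
  | succ n ih =>
    rw [nestedSum_eq_tail_mul]
    exact ih (fun i => hα i.succ) (nestOp_mem_integrableAtOne (hα 0) hf)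

end NestedSums

section Compositions

open PowerSeries

lemma sum_antidiagonalTuple_succ {M : Type*} [AddCommMonoid M] (n b : ℕ)
    (f : (Fin (n + 1) → ℕ) → M) :
    ∑ v ∈ Nat.antidiagonalTuple (n + 1) b, f v =
      ∑ p ∈ antidiagonal b, ∑ v ∈ Nat.antidiagonalTuple n p.2, f (Fin.cons p.1 v) := by
  rw [sum_sigma']
  refine sum_bij' (fun v _ => ⟨(v 0, ∑ i, Fin.tail v i), Fin.tail v⟩)
    (fun x _ => Fin.cons x.1.1 x.2) ?_ ?_ ?_ ?_ ?_
  · intro v hv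
    rw [Nat.mem_antidiagonalTuple, Fin.sum_univ_succ] at hv
    simpa [Nat.mem_antidiagonalTuple, Fin.tail] using hv
  · intro x hx
    simp_all [Nat.mem_antidiagonalTuple, Fin.sum_univ_succ]
  · simp
  · rintro ⟨⟨i, j⟩, v⟩ hx
    simp_all [Nat.mem_antidiagonalTuple]
  · simp

lemma tsum_comp_eq_sum {M : Type*} [AddCommMonoid M] [TopologicalSpace M] {n m b : ℕ}
    (h : n + b = m) (f : (Fin n → ℕ) → M) :
    ∑' γ : Comp n m, f γ.1 = ∑ v ∈ Nat.antidiagonalTuple n b, f fun i => v i + 1 := by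
  let e : Nat.antidiagonalTuple n b ≃ Comp n m :=
    { toFun v := ⟨fun i => v.1 i + 1, fun i => Nat.succ_pos _, by
        simp [sum_add_distrib, Nat.mem_antidiagonalTuple.1 v.2, ← h, add_comm]⟩
      invFun γ := ⟨fun i => γ.1 i - 1, Nat.mem_antidiagonalTuple.2 (by
        have hγ : ∑ i, (γ.1 i - 1 + 1) = m := by
          simpa only [Nat.sub_add_cancel (γ.2.1 _)] using γ.2.2
        rw [sum_add_distrib] at hγ
        simp only [sum_const, card_univ, Fintype.card_fin, smul_eq_mul, mul_one] at hγ
        omega)⟩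
      left_inv v := by simp
      right_inv γ := Subtype.ext (funext fun i => Nat.sub_add_cancel (γ.2.1 i)) }
  rw [← e.tsum_eq, ← Finset.tsum_subtype]
  rfl

lemma coeff_stepSeries (c : ℝ) (i : ℕ) : coeff i (stepSeries c) = c ^ i • nestOp (i + 1) := by
  simp [stepSeries, twistedInt, nestOp]

lemma coeff_stepSeries_pow (c : ℝ) (n b : ℕ) : coeff b (stepSeries c ^ n) =
    c ^ b • ∑ v ∈ Nat.antidiagonalTuple n b, nestedSum fun i => v i + 1 := by
  induction n generalizing b with
  | zero => cases b <;> simp [nestedSum_zero, coeff_one]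
  | succ n ih =>
    rw [pow_succ, coeff_mul, ← Nat.sum_antidiagonal_swap, sum_antidiagonalTuple_succ, smul_sum]
    refine sum_congr rfl fun p hp => ?_
    rw [Prod.fst_swap, Prod.snd_swap, ih, coeff_stepSeries, smul_mul_smul_comm, ← pow_add,
      add_comm, mem_antidiagonal.1 hp, sum_mul]
    congr 1
    refine sum_congr rfl fun v _ => ?_
    rw [nestedSum_eq_tail_mul]
    simp [Fin.tail_def]

lemma coeff_stepSeries_pow_mul_twistedInt (n b : ℕ) :
    coeff b (stepSeries 1 ^ n * twistedInt 1) = ∑ v ∈ Nat.antidiagonalTuple (n + 1) b,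
      nestedSum (Fin.tail fun i => v i + 1) * eulerInt ^ (v 0 + 1) := by
  rw [coeff_mul, ← Nat.sum_antidiagonal_swap, sum_antidiagonalTuple_succ]
  refine sum_congr rfl fun p _ => ?_
  simp [coeff_stepSeries_pow, twistedInt, sum_mul, Fin.tail_def]

lemma coeff_polylogSeries (a b : ℕ) : coeff b (polylogSeries a) =
    ∑ v ∈ Nat.antidiagonalTuple a b, nestedSum (fun i => v i + 1) 1 := by
  rw [polylogSeries, coeff_seriesAct_one, coeff_stepSeries_pow, one_pow, one_smul,
    LinearMap.sum_apply]

lemma coeff_polylogIncSeries (a b : ℕ) :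
    coeff b (polylogIncSeries a) = eulerInt (coeff b (polylogSeries (a + 1))) := by
  rw [polylogIncSeries, twistedInt_zero, coeff_seriesAct_C]

lemma coeff_coeff_polylogSeries_nonneg (a b n : ℕ) : 0 ≤ coeff n (coeff b (polylogSeries a)) := by
  rw [coeff_polylogSeries, map_sum]
  exact sum_nonneg fun v _ => coeff_nestedSum_nonneg _ coeff_one_nonneg n

lemma coeff_polylogSeries_mem (a b : ℕ) : coeff b (polylogSeries a) ∈ integrableAtOne := by
  rw [coeff_polylogSeries]
  exact Submodule.sum_mem _ fun v _ =>
    nestedSum_mem_integrableAtOne (fun i => Nat.succ_pos _) one_mem_integrableAtOne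

lemma coeff_polylogIncSeries_mem (a b : ℕ) : coeff b (polylogIncSeries a) ∈ summableAtOne := by
  rw [coeff_polylogIncSeries]
  exact coeff_polylogSeries_mem (a + 1) b

lemma mzv_append_incLast {m n : ℕ} {α : Fin (m + 1) → ℕ} {β : Fin (n + 1) → ℕ} (hα : ∀ i, 0 < α i)
    (hβ : ∀ i, 0 < β i) : mzv (Fin.append (incLast α) (incLast β)) =
      evalOne (eulerInt (nestedSum β (eulerInt (nestedSum α 1)))) := by
  have h : nestedSum (Fin.append (incLast α) (incLast β)) =
      eulerInt * (nestedSum β * (eulerInt * nestedSum α)) := by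
    rw [nestedSum_append, nestedSum_incLast m.succ_pos, nestedSum_incLast n.succ_pos, mul_assoc]
  rw [mzv_eq_evalOne, h]
  · rfl
  · rw [h]
    exact nestedSum_mem_integrableAtOne hβ <| eulerInt_mem_integrableAtOne <|
      nestedSum_mem_integrableAtOne hα one_mem_integrableAtOne

lemma mzv_incLast_append {l m n : ℕ} {α : Fin (l + 1) → ℕ} {β : Fin (m + 1) → ℕ}
    {γ : Fin (n + 1) → ℕ} (hα : ∀ i, 0 < α i) (hβ : ∀ i, 0 < β i) (hγ : ∀ i, 0 < γ i) :
    mzv (incLast (Fin.append α (Fin.append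
      (Function.update β (Fin.last m) (β (Fin.last m) + γ 0)) (Fin.tail γ)))) =
      evalOne (eulerInt (nestedSum (Fin.tail γ)
        ((eulerInt ^ γ 0) (nestedSum β (nestedSum α 1))))) := by
  have h : nestedSum (incLast (Fin.append α (Fin.append
      (Function.update β (Fin.last m) (β (Fin.last m) + γ 0)) (Fin.tail γ)))) =
      eulerInt * (nestedSum (Fin.tail γ) * (eulerInt ^ γ 0 * (nestedSum β * nestedSum α))) := by
    rw [nestedSum_incLast (by omega), nestedSum_append, nestedSum_append, nestedSum_update_last]
    simp only [mul_assoc]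
  have hpow {f : ℝ⟦X⟧} (hf : f ∈ integrableAtOne) (k : ℕ) : (eulerInt ^ k) f ∈ integrableAtOne :=
    Module.End.pow_apply eulerInt k f ▸
      (show Set.MapsTo eulerInt integrableAtOne integrableAtOne from
        fun _ => eulerInt_mem_integrableAtOne).iterate k hf
  rw [mzv_eq_evalOne, h]
  · rfl
  · rw [h]
    exact nestedSum_mem_integrableAtOne (fun i => hγ i.succ) <| hpow (nestedSum_mem_integrableAtOne
      hβ (nestedSum_mem_integrableAtOne hα one_mem_integrableAtOne)) _

lemma S2_eq_evalOne (a₁ b₁ a₂ b₂ : ℕ) : S2 a₁ b₁ a₂ b₂ =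
    evalOne (eulerInt (coeff b₂ (stepSeries 1 ^ (a₂ + 1)) (coeff b₁ (polylogIncSeries a₁)))) := by
  have hα : a₁ + 1 + b₁ = a₁ + b₁ + 1 := by ring
  have hβ : a₂ + 1 + b₂ = a₂ + b₂ + 1 := by ring
  rw [S2, tsum_comp_eq_sum hα fun α => ∑' β : Comp (a₂ + 1) (a₂ + b₂ + 1),
    mzv (Fin.append (incLast α) (incLast β.1))]
  simp only [coeff_polylogIncSeries, coeff_polylogSeries, coeff_stepSeries_pow, one_pow, one_smul,
    map_sum, LinearMap.sum_apply]
  refine sum_congr rfl fun α _ => ?_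
  rw [tsum_comp_eq_sum hβ fun β => mzv (Fin.append _ (incLast β))]
  exact sum_congr rfl fun β _ =>
    mzv_append_incLast (fun i => Nat.succ_pos _) fun i => Nat.succ_pos _

lemma two_pow_mul_S3_eq_evalOne (a₁ b₁ a₂ b₂ a₃ b₃ : ℕ) : 2 ^ b₂ * S3 a₁ b₁ a₂ b₂ a₃ b₃ =
    evalOne (eulerInt (coeff b₃ (stepSeries 1 ^ a₃ * twistedInt 1)
      (coeff b₂ (stepSeries 2 ^ (a₂ + 1)) (coeff b₁ (polylogSeries (a₁ + 1)))))) := by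
  have hα : a₁ + 1 + b₁ = a₁ + b₁ + 1 := by ring
  have hβ : a₂ + 1 + b₂ = a₂ + b₂ + 1 := by ring
  have hγ : a₃ + 1 + b₃ = a₃ + b₃ + 1 := by ring
  let Z (α : Fin (a₁ + 1) → ℕ) (β : Fin (a₂ + 1) → ℕ) (γ : Fin (a₃ + 1) → ℕ) : ℝ :=
    mzv (incLast (Fin.append α (Fin.append
      (Function.update β (Fin.last a₂) (β (Fin.last a₂) + γ 0)) (Fin.tail γ))))
  have hS3 : S3 a₁ b₁ a₂ b₂ a₃ b₃ = ∑ α ∈ Nat.antidiagonalTuple (a₁ + 1) b₁,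
      ∑ β ∈ Nat.antidiagonalTuple (a₂ + 1) b₂, ∑ γ ∈ Nat.antidiagonalTuple (a₃ + 1) b₃,
        Z (fun i => α i + 1) (fun i => β i + 1) (fun i => γ i + 1) := by
    refine (tsum_comp_eq_sum hα fun α => ∑' β, ∑' γ, Z α (Subtype.val β) (Subtype.val γ)).trans
      (sum_congr rfl fun α _ => ?_)
    refine (tsum_comp_eq_sum hβ fun β => ∑' γ, Z _ β (Subtype.val γ)).trans
      (sum_congr rfl fun β _ => ?_)
    exact tsum_comp_eq_sum hγ (Z _ _)
  simp only [hS3, coeff_polylogSeries, coeff_stepSeries_pow, coeff_stepSeries_pow_mul_twistedInt,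
    map_sum, map_smul, LinearMap.sum_apply, LinearMap.smul_apply, ← smul_sum, smul_eq_mul]
  congr 1
  refine sum_congr rfl fun α _ => sum_congr rfl fun β _ => sum_congr rfl fun γ _ => ?_
  exact mzv_incLast_append (fun i => Nat.succ_pos _) (fun i => Nat.succ_pos _)
    fun i => Nat.succ_pos _

end Compositions

section SumFormula

open PowerSeries Filter Topology

variable {y : ℝ}

/-- The connector `Γ(m + 1 - y) Γ(n + 1 - y) / (Γ(1 - y) Γ(m + n + 1 - y))` of the connected sums
behind the sum formula. -/
noncomputable def connector (y : ℝ) (m n : ℕ) : ℝ :=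
  (∏ i ∈ range m, (i + 1 - y)) * (∏ i ∈ range n, (i + 1 - y)) / ∏ i ∈ range (m + n), (i + 1 - y)

lemma natCast_add_one_sub_pos (hy : y < 1) (n : ℕ) : 0 < n + 1 - y := by
  linarith [n.cast_nonneg (α := ℝ)]

lemma connector_nonneg (hy : y < 1) (m n : ℕ) : 0 ≤ connector y m n := by
  have h (k : ℕ) : 0 ≤ ∏ i ∈ range k, ((i : ℝ) + 1 - y) :=
    prod_nonneg fun i _ => (natCast_add_one_sub_pos hy i).le
  exact div_nonneg (mul_nonneg (h m) (h n)) (h (m + n))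

lemma connector_comm (m n : ℕ) : connector y m n = connector y n m := by
  rw [connector, connector, mul_comm, add_comm m]

lemma connector_zero_right (hy : y < 1) (m : ℕ) : connector y m 0 = 1 := by
  rw [connector, range_zero, prod_empty, mul_one, add_zero]
  exact div_self (prod_ne_zero_iff.2 fun i _ => (natCast_add_one_sub_pos hy i).ne')

lemma mul_connector_succ (hy : y < 1) (m n : ℕ) :
    m * connector y m (n + 1) = (n + 1 - y) * (connector y m n - connector y m (n + 1)) := by
  have h : ∏ i ∈ range (m + n), ((i : ℝ) + 1 - y) ≠ 0 :=
    prod_ne_zero_iff.2 fun i _ => (natCast_add_one_sub_pos hy i).ne'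
  have hmn : ((m + n : ℕ) : ℝ) + 1 - y ≠ 0 := (natCast_add_one_sub_pos hy _).ne'
  rw [connector, connector, ← add_assoc, prod_range_succ, prod_range_succ _ (m + n)]
  field_simp
  push_cast
  ring

lemma connector_succ_le (hy : y < 1) (m n : ℕ) : connector y m (n + 1) ≤ connector y m n :=
  sub_nonneg.1 <| nonneg_of_mul_nonneg_right
    (mul_connector_succ hy m n ▸ mul_nonneg m.cast_nonneg (connector_nonneg hy m _))
    (natCast_add_one_sub_pos hy n)

lemma antitone_connector (hy : y < 1) (m : ℕ) : Antitone (connector y m) :=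
  antitone_nat_of_succ_le (connector_succ_le hy m)

lemma connector_one_left (hy : y < 1) (n : ℕ) : connector y 1 n = (1 - y) / (n + 1 - y) := by
  have h : ∏ i ∈ range n, ((i : ℝ) + 1 - y) ≠ 0 :=
    prod_ne_zero_iff.2 fun i _ => (natCast_add_one_sub_pos hy i).ne'
  have hn : (n : ℝ) + 1 - y ≠ 0 := (natCast_add_one_sub_pos hy n).ne'
  rw [connector, prod_range_one, add_comm 1, prod_range_succ]
  field_simp
  simp

lemma tendsto_connector_succ (hy : y < 1) (m : ℕ) :
    Tendsto (connector y (m + 1)) atTop (𝓝 0) := by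
  have hone : Tendsto (connector y 1) atTop (𝓝 0) := by
    simp only [funext (connector_one_left hy), add_sub_assoc]
    exact tendsto_const_nhds.div_atTop
      (tendsto_atTop_add_const_right _ _ tendsto_natCast_atTop_atTop)
  refine squeeze_zero (connector_nonneg hy _) (fun n => ?_) hone
  rw [connector_comm, connector_comm 1]
  exact antitone_connector hy n (Nat.le_add_left 1 m)

lemma hasSum_connector_div (hy : y < 1) (m k : ℕ) :
    HasSum (fun n => connector y (m + 1) (n + k + 1) / ((n + k : ℕ) + 1 - y))
      (connector y (m + 1) k / (m + 1)) := by
  have h := (hasSum_sub_succ ((antitone_connector hy (m + 1)).comp_monotone fun i j hij =>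
    Nat.add_le_add_right hij k)
    ((tendsto_add_atTop_iff_nat k).2 (tendsto_connector_succ hy m))).div_const (m + 1 : ℝ)
  simp only [Function.comp_apply, zero_add] at h
  refine h.congr_fun fun n => ?_
  have hn := natCast_add_one_sub_pos hy (n + k)
  have hrec := mul_connector_succ hy (m + 1) (n + k)
  rw [div_eq_div_iff hn.ne' (by positivity), add_right_comm n 1 k]
  push_cast at hrec ⊢
  linarith

/-- The value `∑_b y ^ b c_b` at `y`, where `c_b` is the coefficient of `t ^ n y ^ b` in the
generating function `polylogSeries a`. -/
noncomputable def polylogCoeff (y : ℝ) : ℕ → ℕ → ℝ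
  | 0, n => if n = 0 then 1 else 0
  | a + 1, n => (∑ m ∈ range n, polylogCoeff y a m) / (n - y)

lemma hasSum_pow_div_pow (hy : y ∈ Set.Ico 0 1) (n : ℕ) :
    HasSum (fun i : ℕ => y ^ i / ((n : ℝ) + 1) ^ (i + 1)) (n + 1 - y)⁻¹ := by
  have hn := natCast_add_one_sub_pos hy.2 n
  have h := (hasSum_geometric_of_lt_one (r := y / (n + 1)) (div_nonneg hy.1 (by positivity))
    ((div_lt_one (by positivity)).2 (by linarith))).div_const (n + 1 : ℝ)
  have hval : (1 - y / (n + 1 : ℝ))⁻¹ / (n + 1) = (n + 1 - y)⁻¹ := by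
    rw [one_sub_div (by positivity), inv_div]
    field_simp
  simpa only [hval, div_pow, div_div, ← pow_succ] using h

lemma coeff_coeff_polylogSeries_succ (a b n : ℕ) : coeff n (coeff b (polylogSeries (a + 1))) =
    ∑ p ∈ antidiagonal b, (∑ m ∈ range n, coeff m (coeff p.2 (polylogSeries a))) /
      n ^ (p.1 + 1) := by
  rw [polylogSeries_succ, coeff_seriesAct, map_sum]
  simp only [coeff_stepSeries, one_pow, one_smul, coeff_nestOp]

lemma hasSum_polylogCoeff (hy : y ∈ Set.Ico 0 1) (a n : ℕ) :
    HasSum (fun b => y ^ b * coeff n (coeff b (polylogSeries a))) (polylogCoeff y a n) := by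
  induction a generalizing n with
  | zero =>
    convert hasSum_single (f := fun b => y ^ b * coeff n (coeff b (polylogSeries 0))) 0 _ using 1
    · simp [polylogCoeff, polylogSeries_zero, coeff_one]
    · intro b hb
      simp [polylogSeries_zero, coeff_one, hb]
  | succ a ih =>
    rw [polylogCoeff]
    cases n with
    | zero => simp [coeff_coeff_polylogSeries_succ]
    | succ n =>
      rw [div_eq_inv_mul, Nat.cast_succ]
      refine (hasSum_sum_antidiagonal_mul (hasSum_pow_div_pow hy n)
        (hasSum_sum fun m _ => ih m)).congr_fun fun b => ?_
      rw [coeff_coeff_polylogSeries_succ, mul_sum]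
      refine sum_congr rfl fun p hp => ?_
      rw [← mul_sum, ← mem_antidiagonal.1 hp, Nat.cast_succ]
      ring

lemma polylogCoeff_nonneg (hy : y ∈ Set.Ico 0 1) (a n : ℕ) : 0 ≤ polylogCoeff y a n := by
  induction a generalizing n with
  | zero => rw [polylogCoeff]; split_ifs <;> norm_num
  | succ a ih =>
    rw [polylogCoeff]
    cases n with
    | zero => simp
    | succ n =>
      exact div_nonneg (sum_nonneg fun m _ => ih m)
        (by simpa using (natCast_add_one_sub_pos hy.2 n).le)

lemma hasSum_connector_mul_polylogCoeff (hy : y ∈ Set.Ico 0 1) (m a : ℕ) :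
    HasSum (fun n => connector y (m + 1) n * polylogCoeff y a n) ((m + 1 : ℝ) ^ a)⁻¹ := by
  induction a with
  | zero =>
    convert hasSum_single (f := fun n => connector y (m + 1) n * polylogCoeff y 0 n) 0 _ using 1
    · simp [polylogCoeff, connector_zero_right hy.2]
    · intro n hn
      simp [polylogCoeff, hn]
  | succ a ih =>
    let f (k n : ℕ) : ℝ :=
      if k < n then polylogCoeff y a k * (connector y (m + 1) n / (n - y)) else 0
    have hf (k n : ℕ) : 0 ≤ f k n := by
      simp only [f]
      split_ifs with hkn
      · obtain ⟨n, rfl⟩ := Nat.exists_eq_succ_of_ne_zero (Nat.ne_zero_of_lt hkn)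
        refine mul_nonneg (polylogCoeff_nonneg hy a k) (div_nonneg (connector_nonneg hy.2 _ _) ?_)
        rw [Nat.cast_succ]
        exact (natCast_add_one_sub_pos hy.2 n).le
      · exact le_rfl
    have hrow (k : ℕ) : HasSum (f k) (polylogCoeff y a k * (connector y (m + 1) k / (m + 1))) := by
      have hrange : ∑ n ∈ range (k + 1), f k n = 0 :=
        sum_eq_zero fun n hn => if_neg (by simpa [Nat.lt_succ_iff] using hn)
      rw [← hasSum_nat_add_iff' (k + 1), hrange, sub_zero]
      refine ((hasSum_connector_div hy.2 m k).mul_left (polylogCoeff y a k)).congr_fun fun n => ?_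
      rw [← add_assoc, ← Nat.cast_succ]
      exact if_pos (by omega)
    have hcol (n : ℕ) : HasSum (fun k => f k n)
        (connector y (m + 1) n * polylogCoeff y (a + 1) n) := by
      have hval : connector y (m + 1) n * polylogCoeff y (a + 1) n = ∑ k ∈ range n, f k n := by
        rw [polylogCoeff, mul_div_left_comm, sum_mul]
        exact sum_congr rfl fun k hk => (if_pos (mem_range.1 hk)).symm
      rw [hval]
      exact hasSum_sum_of_ne_finset_zero fun k hk => if_neg (by simpa using hk)
    refine hasSum_swap hf hrow hcol ?_
    rw [pow_succ, mul_inv, ← div_eq_mul_inv]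
    exact (ih.div_const (m + 1 : ℝ)).congr_fun fun k => by ring

lemma summable_inv_pow_mul_inv_sub (hy : y ∈ Set.Ico 0 1) (a : ℕ) :
    Summable fun m : ℕ => ((m + 1 : ℝ) ^ (a + 1))⁻¹ * (m + 1 - y)⁻¹ := by
  have hsq : Summable fun m : ℕ => (((m + 1 : ℕ) : ℝ) ^ 2)⁻¹ :=
    (summable_nat_add_iff 1).2 (Real.summable_nat_pow_inv.2 one_lt_two)
  refine (hsq.mul_right (1 - y)⁻¹).of_nonneg_of_le (fun m => ?_) fun m => ?_
  · have := natCast_add_one_sub_pos hy.2 m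
    positivity
  · have hpow : (m + 1 : ℝ) ≤ (m + 1) ^ (a + 1) := le_self_pow₀ (by simp) a.succ_ne_zero
    have hsub : (m + 1) * (1 - y) ≤ m + 1 - y := by
      nlinarith [mul_nonneg hy.1 m.cast_nonneg (α := ℝ)]
    have hy' : 0 < 1 - y := sub_pos.2 hy.2
    rw [← mul_inv, ← mul_inv, Nat.cast_succ, sq, mul_assoc]
    gcongr

lemma hasSum_polylogCoeff_succ_div (hy : y ∈ Set.Ico 0 1) (a : ℕ) :
    HasSum (fun n => polylogCoeff y (a + 1) n / n)
      (∑' m : ℕ, ((m + 1 : ℝ) ^ (a + 1))⁻¹ * (m + 1 - y)⁻¹) := by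
  refine hasSum_swap
    (f := fun m n => connector y (m + 1) n * polylogCoeff y (a + 1) n * (m + 1 - y)⁻¹)
    (fun m n => ?_) (fun m => (hasSum_connector_mul_polylogCoeff hy m (a + 1)).mul_right _)
    (fun n => ?_) (summable_inv_pow_mul_inv_sub hy a).hasSum
  · exact mul_nonneg (mul_nonneg (connector_nonneg hy.2 _ _) (polylogCoeff_nonneg hy _ _))
      (inv_nonneg.2 (natCast_add_one_sub_pos hy.2 m).le)
  · cases n with
    | zero => simp [polylogCoeff]
    | succ n =>
      have h := (hasSum_connector_div hy.2 n 0).mul_left (polylogCoeff y (a + 1) (n + 1))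
      simp only [add_zero, connector_zero_right hy.2, mul_one_div] at h
      rw [Nat.cast_succ]
      refine h.congr_fun fun m => ?_
      rw [connector_comm]
      ring

lemma hasSum_pow_mul_evalOne_polylogIncSeries (hy : y ∈ Set.Ico 0 1) (a : ℕ) :
    HasSum (fun b => y ^ b * evalOne (coeff b (polylogIncSeries a)))
      (∑' m : ℕ, ((m + 1 : ℝ) ^ (a + 1))⁻¹ * (m + 1 - y)⁻¹) := by
  refine hasSum_swap (f := fun n b => y ^ b * coeff n (coeff b (polylogSeries (a + 1))) / n)
    (fun n b => ?_) (fun n => (hasSum_polylogCoeff hy (a + 1) n).div_const _) (fun b => ?_)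
    (hasSum_polylogCoeff_succ_div hy a)
  · have := coeff_coeff_polylogSeries_nonneg (a + 1) b n
    have := hy.1
    positivity
  · have hb := coeff_polylogIncSeries_mem a b
    rw [evalOne_eq_tsum hb]
    refine ((mem_summableAtOne.1 hb).hasSum.mul_left (y ^ b)).congr_fun fun n => ?_
    rw [coeff_polylogIncSeries, coeff_eulerInt, mul_div_assoc]

lemma hasSum_pow_mul_mzv_singleton (hy : y ∈ Set.Ico 0 1) (a : ℕ) :
    HasSum (fun b => y ^ b * mzv ![a + b + 2])
      (∑' m : ℕ, ((m + 1 : ℝ) ^ (a + 1))⁻¹ * (m + 1 - y)⁻¹) := by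
  refine hasSum_swap
    (f := fun m b : ℕ => ((m + 1 : ℝ) ^ (a + 1))⁻¹ * (y ^ b / (m + 1) ^ (b + 1)))
    (fun m b => ?_) (fun m => (hasSum_pow_div_pow hy m).mul_left _) (fun b => ?_)
    (summable_inv_pow_mul_inv_sub hy a).hasSum
  · have := hy.1
    positivity
  · have h := (hasSum_nat_add_iff' 1).2 (Real.summable_nat_pow_inv.2
      (show 1 < a + b + 2 by omega)).hasSum
    rw [← mzv_singleton (by omega), sum_range_one, Nat.cast_zero, zero_pow (by omega), inv_zero,
      sub_zero] at h
    refine (h.mul_left (y ^ b)).congr_fun fun m => ?_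
    rw [show a + b + 2 = (a + 1) + (b + 1) by ring, Nat.cast_succ, pow_add _ (a + 1), mul_inv,
      div_eq_mul_inv, mul_left_comm]

lemma evalOne_coeff_polylogIncSeries (a b : ℕ) :
    evalOne (coeff b (polylogIncSeries a)) = mzv ![a + b + 2] := by
  have h : (fun b => evalOne (coeff b (polylogIncSeries a)) - mzv ![a + b + 2]) = 0 :=
    eq_zero_of_hasSum_pow_mul_zero fun y hy => by
      simpa only [mul_sub, sub_self] using
        (hasSum_pow_mul_evalOne_polylogIncSeries hy a).sub (hasSum_pow_mul_mzv_singleton hy a)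
  exact sub_eq_zero.1 (congrFun h b)

end SumFormula

section DoubleZeta

open PowerSeries

lemma mzv_singleton_mul_mzv_singleton {k l : ℕ} (hk : 2 ≤ k) (hl : 2 ≤ l) :
    mzv ![k] * mzv ![l] = mzv ![k, l] + mzv ![l, k] + mzv ![k + l] := by
  rw [mzv_singleton (by omega), mzv_singleton (by omega), mzv_pair (by omega), mzv_pair (by omega),
    mzv_singleton (by omega), tsum_mul_tsum_eq_tsum_stuffle (Real.summable_nat_pow_inv.2 hk)
      (Real.summable_nat_pow_inv.2 hl)]
  simp only [pow_add, mul_inv]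

lemma evalOne_coeff_polylogIncSeries_mul (a a' ℓ : ℕ) :
    evalOne (coeff ℓ (polylogIncSeries a * polylogIncSeries a')) =
      ∑ b ∈ antidiagonal ℓ, mzv ![a + b.1 + 2] * mzv ![a' + b.2 + 2] := by
  rw [coeff_mul, map_sum]
  refine sum_congr rfl fun b _ => ?_
  rw [evalOne_mul (coeff_polylogIncSeries_mem _ _) (coeff_polylogIncSeries_mem _ _),
    evalOne_coeff_polylogIncSeries, evalOne_coeff_polylogIncSeries]

lemma evalOne_coeff_eq_sum_S2 (a₁ a₂ ℓ : ℕ) :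
    evalOne (coeff ℓ (seriesAct (twistedInt 0)
      (seriesAct (stepSeries 1 ^ (a₂ + 1)) (polylogIncSeries a₁)))) =
      ∑ b ∈ antidiagonal ℓ, S2 a₁ b.1 a₂ b.2 := by
  rw [twistedInt_zero, coeff_seriesAct_C, coeff_seriesAct, map_sum, map_sum,
    ← Nat.sum_antidiagonal_swap]
  exact sum_congr rfl fun b _ => (S2_eq_evalOne a₁ b.1 a₂ b.2).symm

lemma evalOne_coeff_eq_sum_S3 (a₁ a₂ a₃ ℓ : ℕ) :
    evalOne (coeff ℓ (seriesAct (twistedInt 0)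
      (seriesAct (stepSeries 1 ^ a₃ * twistedInt 1 * stepSeries 2 ^ (a₂ + 1))
        (polylogSeries (a₁ + 1))))) =
      ∑ b ∈ antidiagonal ℓ, ∑ b' ∈ antidiagonal b.2, 2 ^ b'.1 * S3 a₁ b.1 a₂ b'.1 a₃ b'.2 := by
  rw [twistedInt_zero, coeff_seriesAct_C, coeff_seriesAct]
  simp only [coeff_mul _ (stepSeries 1 ^ a₃ * twistedInt 1), LinearMap.sum_apply, map_sum,
    Module.End.mul_apply, two_pow_mul_S3_eq_evalOne]
  let f (i j l : ℕ) : ℝ := evalOne (eulerInt (coeff i (stepSeries 1 ^ a₃ * twistedInt 1)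
    (coeff j (stepSeries 2 ^ (a₂ + 1)) (coeff l (polylogSeries (a₁ + 1))))))
  exact (sum_antidiagonal_assoc f ℓ).trans (sum_antidiagonal_reverse f ℓ)

end DoubleZeta

section MainTheorem

open PowerSeries

lemma sum_mul_mzv_mul_mzv (k ℓ : ℕ) (x y : ℝ) :
    ∑ a ∈ antidiagonal k, x ^ a.1 * y ^ a.2 *
        ∑ b ∈ antidiagonal ℓ, mzv ![a.1 + b.1 + 2] * mzv ![a.2 + b.2 + 2] =
      (ℓ + 1 : ℝ) * mzv ![k + ℓ + 4] * (∑ a ∈ antidiagonal k, x ^ a.1 * y ^ a.2) +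
        ∑ a ∈ antidiagonal k, ∑ b ∈ antidiagonal ℓ,
          (x ^ a.1 * y ^ a.2 + y ^ a.1 * x ^ a.2) * mzv ![a.2 + b.2 + 2, a.1 + b.1 + 2] := by
  have hstuffle : ∀ a ∈ antidiagonal k, ∀ b ∈ antidiagonal ℓ,
      x ^ a.1 * y ^ a.2 * (mzv ![a.1 + b.1 + 2] * mzv ![a.2 + b.2 + 2]) =
        mzv ![k + ℓ + 4] * (x ^ a.1 * y ^ a.2) +
          (x ^ a.1 * y ^ a.2 * mzv ![a.2 + b.2 + 2, a.1 + b.1 + 2] +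
            x ^ a.1 * y ^ a.2 * mzv ![a.1 + b.1 + 2, a.2 + b.2 + 2]) := by
    intro a ha b hb
    rw [HasAntidiagonal.mem_antidiagonal] at ha hb
    rw [mzv_singleton_mul_mzv_singleton (by omega) (by omega),
      show a.1 + b.1 + 2 + (a.2 + b.2 + 2) = k + ℓ + 4 by omega]
    ring
  have hswap : ∑ a ∈ antidiagonal k, ∑ b ∈ antidiagonal ℓ,
      x ^ a.1 * y ^ a.2 * mzv ![a.1 + b.1 + 2, a.2 + b.2 + 2] =
        ∑ a ∈ antidiagonal k, ∑ b ∈ antidiagonal ℓ,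
          y ^ a.1 * x ^ a.2 * mzv ![a.2 + b.2 + 2, a.1 + b.1 + 2] := by
    rw [← Nat.sum_antidiagonal_swap]
    refine sum_congr rfl fun a _ => ?_
    rw [← Nat.sum_antidiagonal_swap]
    exact sum_congr rfl fun b _ => by rw [Prod.fst_swap, Prod.snd_swap, mul_comm (x ^ _)]; rfl
  simp only [mul_sum]
  rw [sum_congr rfl fun a ha => sum_congr rfl (hstuffle a ha)]
  simp only [sum_add_distrib, add_mul _ _ (mzv ![_, _]), hswap, sum_const, Nat.card_antidiagonal,
    nsmul_eq_mul, Nat.cast_succ, mul_assoc (ℓ + 1 : ℝ)]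

lemma sum_mul_mzv_mul_mzv_eq_sum_S2_add_sum_S3 (k ℓ : ℕ) (x y : ℝ) :
    ∑ a ∈ antidiagonal k, x ^ a.1 * y ^ a.2 *
        ∑ b ∈ antidiagonal ℓ, mzv ![a.1 + b.1 + 2] * mzv ![a.2 + b.2 + 2] =
      ∑ a ∈ antidiagonal k, (x ^ a.1 * y ^ a.2 + y ^ a.1 * x ^ a.2) *
          ∑ b ∈ antidiagonal ℓ, S2 a.1 b.1 a.2 b.2 +
        ∑ a ∈ antidiagonal k, ∑ a' ∈ antidiagonal a.2,
          (x ^ a.1 + y ^ a.1) * (x + y) ^ a'.1 * (x ^ a'.2 + y ^ a'.2) *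
            ∑ b ∈ antidiagonal ℓ, ∑ b' ∈ antidiagonal b.2,
              2 ^ b'.1 * S3 a.1 b.1 a'.1 b'.1 a'.2 b'.2 := by
  have h := congrArg (fun F => evalOne (coeff ℓ F))
    (sum_smul_polylogIncSeries_mul_eq_sum x y k)
  simpa only [map_add, map_sum, map_smul, coeff_smul, smul_eq_mul,
    evalOne_coeff_polylogIncSeries_mul, evalOne_coeff_eq_sum_S2, evalOne_coeff_eq_sum_S3] using h

end MainTheorem

theorem theorem1_xi_eq_one (k ℓ : ℕ) (μ₁ μ₂ : ℝ) :
    (ℓ + 1 : ℝ) * mzv ![k + ℓ + 4] *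
        (∑ a ∈ antidiagonal k, μ₁ ^ a.1 * μ₂ ^ a.2) +
      (∑ a ∈ antidiagonal k, ∑ b ∈ antidiagonal ℓ,
        (μ₁ ^ a.1 * μ₂ ^ a.2 + μ₂ ^ a.1 * μ₁ ^ a.2) *
          mzv ![a.2 + b.2 + 2, a.1 + b.1 + 2]) =
    (∑ a ∈ antidiagonal k, ∑ b ∈ antidiagonal ℓ,
      (μ₁ ^ a.1 * μ₂ ^ a.2 + μ₂ ^ a.1 * μ₁ ^ a.2) * S2 a.1 b.1 a.2 b.2) +
    ∑ a ∈ antidiagonal k, ∑ a' ∈ antidiagonal a.2,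
      ∑ b ∈ antidiagonal ℓ, ∑ b' ∈ antidiagonal b.2,
        (μ₁ ^ a.1 + μ₂ ^ a.1) * (μ₁ + μ₂) ^ a'.1 * (2 : ℝ) ^ b'.1 *
          (μ₁ ^ a'.2 + μ₂ ^ a'.2) *
          S3 a.1 b.1 a'.1 b'.1 a'.2 b'.2 := by
  rw [← sum_mul_mzv_mul_mzv, sum_mul_mzv_mul_mzv_eq_sum_S2_add_sum_S3]
  simp only [mul_sum]
  congr! 5 with a _ a' _ b _ b' _
  ring
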